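/- Assume π, every entry of p, and all the emission weights f_0, f_1,…,f_T are strictly positive. Then for every t ∈ {1,…,T} and j ∈ S, the smoothed pairwise regime probabilities P(r_{t−1} = i and r_t = j) satisfy: (a) if i ∈ S_AR, then P(r_{t−1} = i and r_t = j) = P(n_{t,i}(r) = 1 and r_t = j) = Σ_{n ∈ S^(t) : n_i = 1} γ^(t)_n(j); (b) if i ∈ S_AR^c, then P(r_{t−1} = i and r_t = j) = Σ_{n : n − 1 ∈ S^(t−1)} γ^(t)_n(j) · p_{ij} · α̂^(t−1)_{n−1}(i) / (Σ_{ℓ ∈ S_AR^c} p_{ℓj} · α̂^(t−1)_{n−1}(ℓ)). -/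

import Mathlib

open Finset

namespace MRS

/-- Time since the last visit to the regime with value `j` strictly before time `t`;
equals `t + 1` if that regime was never visited before time `t`. -/
def counter {M : ℕ} (r : ℕ → Fin M) (t : ℕ) (j : ℕ) : ℕ :=
  if h : ((Finset.range t).filter fun τ => (r τ : ℕ) = j).Nonempty then
    t - ((Finset.range t).filter fun τ => (r τ : ℕ) = j).max' h
  else t + 1

/-- Counter vector for the `k` AR(1) regimes (the regimes with values `0, …, k-1`). -/
def nvec {M : ℕ} (k : ℕ) (r : ℕ → Fin M) (t : ℕ) : Fin k → ℕ :=
  fun j => counter r t (j : ℕ)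

/-- Extend a finite path to a stream (values beyond the end repeat the last value;
they are never used for counters up to time `t`). -/
def pad {M t : ℕ} (r : Fin (t + 1) → Fin M) : ℕ → Fin M :=
  fun s => r ⟨min s t, Nat.lt_succ_of_le (min_le_right s t)⟩

/-- The set `S^(t)` of possible counter vectors at time `t`: every entry lies in
`{1, …, t+1}`, at most `min t k` entries differ from `t+1`, and the entries different
from `t+1` are pairwise distinct. -/
def Sset (k t : ℕ) : Finset (Fin k → ℕ) :=
  (Fintype.piFinset fun _ : Fin k => Finset.Icc 1 (t + 1)).filter fun n =>
    (Finset.univ.filter fun j => n j ≠ t + 1).card ≤ min t k ∧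
      ∀ i j : Fin k, i ≠ j → n i ≠ t + 1 → n j ≠ t + 1 → n i ≠ n j

/-- Weight of a (partial) path `r = (r_0, …, r_t)`:
`π_{r_0} f_0(r_0) ∏_{s=1}^t p_{r_{s-1} r_s} f_s(r_s, n_s(r))`. -/
noncomputable def wpath {M : ℕ} (k : ℕ) (pi0 : Fin M → ℝ) (p : Fin M → Fin M → ℝ)
    (f0 : Fin M → ℝ) (f : ℕ → Fin M → (Fin k → ℕ) → ℝ) {t : ℕ}
    (r : Fin (t + 1) → Fin M) : ℝ :=
  pi0 (r 0) * f0 (r 0) *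
    ∏ s ∈ Finset.Icc 1 t, p (pad r (s - 1)) (pad r s) * f s (pad r s) (nvec k (pad r) s)

/-- Forward quantity `α^(t)_n(j)`: total weight of partial paths ending in regime `j`
at time `t` with counter vector `n`. -/
noncomputable def alpha {M : ℕ} (k : ℕ) (pi0 : Fin M → ℝ) (p : Fin M → Fin M → ℝ)
    (f0 : Fin M → ℝ) (f : ℕ → Fin M → (Fin k → ℕ) → ℝ)
    (t : ℕ) (n : Fin k → ℕ) (j : Fin M) : ℝ :=
  ∑ r ∈ Finset.univ.filter
      (fun r : Fin (t + 1) → Fin M => r (Fin.last t) = j ∧ nvec k (pad r) t = n),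
    wpath k pi0 p f0 f r

end MRS

namespace MRS

/-- Total forward mass at time `t`. -/
noncomputable def Asum {M : ℕ} (k : ℕ) (pi0 : Fin M → ℝ) (p : Fin M → Fin M → ℝ)
    (f0 : Fin M → ℝ) (f : ℕ → Fin M → (Fin k → ℕ) → ℝ) (t : ℕ) : ℝ :=
  ∑ n ∈ Sset k t, ∑ i : Fin M, alpha k pi0 p f0 f t n i

/-- Filtered probability `α̂^(t)_n(j) = α^(t)_n(j) / (∑_{ℓ} ∑_{n'} α^(t)_{n'}(ℓ))`. -/
noncomputable def alphaHat {M : ℕ} (k : ℕ) (pi0 : Fin M → ℝ) (p : Fin M → Fin M → ℝ)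
    (f0 : Fin M → ℝ) (f : ℕ → Fin M → (Fin k → ℕ) → ℝ)
    (t : ℕ) (n : Fin k → ℕ) (j : Fin M) : ℝ :=
  alpha k pi0 p f0 f t n j / Asum k pi0 p f0 f t

/-- The smoothing path measure: `P(E) = (∑_{r ∈ E} w(r)) / (∑_r w(r))`. -/
noncomputable def Ppath {M : ℕ} (k : ℕ) (pi0 : Fin M → ℝ) (p : Fin M → Fin M → ℝ)
    (f0 : Fin M → ℝ) (f : ℕ → Fin M → (Fin k → ℕ) → ℝ) (T : ℕ)
    (E : Finset (Fin (T + 1) → Fin M)) : ℝ :=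
  (∑ r ∈ E, wpath k pi0 p f0 f r) / ∑ r : Fin (T + 1) → Fin M, wpath k pi0 p f0 f r

/-- Smoothed probability `γ^(t)_n(i) = P(r_t = i, n_t(r) = n)`. -/
noncomputable def gamma {M : ℕ} (k : ℕ) (pi0 : Fin M → ℝ) (p : Fin M → Fin M → ℝ)
    (f0 : Fin M → ℝ) (f : ℕ → Fin M → (Fin k → ℕ) → ℝ) (T : ℕ)
    (t : ℕ) (n : Fin k → ℕ) (i : Fin M) : ℝ :=
  Ppath k pi0 p f0 f T
    (Finset.univ.filter fun r : Fin (T + 1) → Fin M =>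
      pad r t = i ∧ nvec k (pad r) t = n)

end MRS

/-!
A path weight factors at every time `s` into the weight of the past, the transition out of `r_s`
and a backward quantity that sees the past only through the pair (counters, regime) at time
`s + 1`. If `r_s` is not an AR regime, the step to time `s + 1` just increments every counter, so
the backward quantity at the counters `n + 1` does not depend on which non-AR regime was left.
It therefore cancels in the conditional probability of `r_s` given `r_{s+1} = j` and
`n_{s+1} = n + 1`, which is the Bayes ratio of formula (b). For an AR regime `i` there is nothing to
compute: `r_s = i` says exactly that its counter equals `1` at time `s + 1`.
-/

namespace MRS

section Counters

variable {M k : ℕ}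

lemma counter_zero (x : ℕ → Fin M) (j : ℕ) : counter x 0 j = 1 := by
  simp [counter]

lemma counter_succ (x : ℕ → Fin M) (t j : ℕ) :
    counter x (t + 1) j = if (x t : ℕ) = j then 1 else counter x t j + 1 := by
  split_ifs with hx
  · have hvisit : ((range (t + 1)).filter fun τ => (x τ : ℕ) = j).Nonempty := ⟨t, by simp [hx]⟩
    have hmax : ((range (t + 1)).filter fun τ => (x τ : ℕ) = j).max' hvisit = t :=
      le_antisymm (max'_le _ _ _ fun u hu => by grind) (le_max' _ _ (by simp [hx]))
    rw [counter, dif_pos hvisit, hmax, Nat.add_sub_cancel_left]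
  · simp only [counter, range_add_one, filter_insert, if_neg hx]
    split_ifs with hvisit
    · have hmax := max'_mem _ hvisit
      rw [mem_filter, mem_range] at hmax
      omega
    · rfl

lemma one_le_counter (x : ℕ → Fin M) (t j : ℕ) : 1 ≤ counter x t j := by
  cases t <;> grind [counter_zero, counter_succ]

lemma counter_le_add_one (x : ℕ → Fin M) (t j : ℕ) : counter x t j ≤ t + 1 := by
  induction t <;> grind [counter_zero, counter_succ]

lemma apply_sub_counter {x : ℕ → Fin M} {t j : ℕ} (h : counter x t j ≠ t + 1) :
    (x (t - counter x t j) : ℕ) = j := by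
  induction t with
  | zero => exact absurd (counter_zero x j) h
  | succ t ih => grind [counter_succ]

lemma apply_ne_of_lt_add_counter {x : ℕ → Fin M} {t j u : ℕ} (hut : u < t)
    (hu : t < u + counter x t j) : (x u : ℕ) ≠ j := by
  induction t with
  | zero => omega
  | succ t ih => grind [counter_succ]

lemma counter_eq_of_last_visit {x : ℕ → Fin M} {t j m : ℕ} (hm : 1 ≤ m) (hmt : m ≤ t + 1)
    (hvisit : m ≠ t + 1 → (x (t - m) : ℕ) = j)
    (hlast : ∀ u < t, t < u + m → (x u : ℕ) ≠ j) : counter x t j = m := by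
  rcases lt_trichotomy (counter x t j) m with hlt | heq | hgt
  · have hpos := one_le_counter x t j
    have heq : (x (t - counter x t j) : ℕ) = j := apply_sub_counter (by omega)
    exact absurd heq (hlast _ (by omega) (by omega))
  · exact heq
  · have hle := counter_le_add_one x t j
    have hne : (x (t - m) : ℕ) ≠ j :=
      apply_ne_of_lt_add_counter (t := t) (by omega) (by omega)
    exact absurd (hvisit (by omega)) hne

lemma dependsOn_nvec (k t : ℕ) : DependsOn (fun x : ℕ → Fin M => nvec k x t) (Set.Iio t) := by
  intro x y hxy
  funext i
  simp only [nvec]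
  induction t with
  | zero => simp only [counter_zero]
  | succ t ih =>
    rw [counter_succ, counter_succ, hxy t (Nat.lt_succ_self t),
      ih fun u hu => hxy u (Nat.lt_succ_of_lt hu)]

/-- The counters at time `t + 1` when the counters at time `t` are `n` and `r_t = i`. -/
def stepCounter (n : Fin k → ℕ) (i : Fin M) : Fin k → ℕ :=
  fun l => if (i : ℕ) = l then 1 else n l + 1

lemma nvec_succ (x : ℕ → Fin M) (t : ℕ) :
    nvec k x (t + 1) = stepCounter (nvec k x t) (x t) :=
  funext fun _ => counter_succ _ _ _

lemma stepCounter_of_le (n : Fin k → ℕ) {i : Fin M} (hi : k ≤ (i : ℕ)) :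
    stepCounter n i = fun l => n l + 1 :=
  funext fun l => if_neg (l.isLt.trans_le hi).ne'

lemma nvec_succ_apply_eq_one_iff (hkM : k ≤ M) (x : ℕ → Fin M) (t : ℕ) (i : Fin k) :
    nvec k x (t + 1) i = 1 ↔ x t = Fin.castLE hkM i := by
  have hpos : 1 ≤ nvec k x t i := one_le_counter x t i
  rw [nvec_succ, stepCounter, Fin.ext_iff, Fin.val_castLE]
  split_ifs with hi <;> simp only [hi, iff_false]
  omega

lemma nvec_succ_eq_add_one_iff (x : ℕ → Fin M) (t : ℕ) {n : Fin k → ℕ} (hn : ∀ l, 1 ≤ n l) :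
    nvec k x (t + 1) = (fun l => n l + 1) ↔ k ≤ (x t : ℕ) ∧ nvec k x t = n := by
  rw [nvec_succ]
  constructor
  · intro h
    have hk : k ≤ (x t : ℕ) := by
      by_contra! hlt
      have hreset := congrFun h ⟨x t, hlt⟩
      have hpos := hn ⟨x t, hlt⟩
      simp only [stepCounter, if_true] at hreset
      omega
    rw [stepCounter_of_le _ hk] at h
    exact ⟨hk, funext fun l => Nat.succ_injective (congrFun h l)⟩
  · rintro ⟨hk, rfl⟩
    exact stepCounter_of_le _ hk

lemma one_le_of_mem_Sset {t : ℕ} {n : Fin k → ℕ} (hn : n ∈ Sset k t) (l : Fin k) : 1 ≤ n l := by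
  simp only [Sset, mem_filter, Fintype.mem_piFinset, mem_Icc] at hn
  exact (hn.1 l).1

lemma nvec_mem_Sset (x : ℕ → Fin M) (t : ℕ) : nvec k x t ∈ Sset k t := by
  have hinj : ∀ i j : Fin k, i ≠ j → nvec k x t i ≠ t + 1 → nvec k x t j ≠ t + 1 →
      nvec k x t i ≠ nvec k x t j := by
    intro i j hij hi hj heq
    have hxi : (x (t - nvec k x t i) : ℕ) = i := apply_sub_counter hi
    have hxj : (x (t - nvec k x t j) : ℕ) = j := apply_sub_counter hj
    exact hij (Fin.ext (hxi.symm.trans (heq ▸ hxj)))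
  have hbounds : ∀ i, 1 ≤ nvec k x t i ∧ nvec k x t i ≤ t + 1 :=
    fun i => ⟨one_le_counter x t i, counter_le_add_one x t i⟩
  have hcard : #{i | nvec k x t i ≠ t + 1} ≤ #(Icc 1 t) :=
    card_le_card_of_injOn (nvec k x t) (fun i hi => by grind) fun i hi j _ heq => by grind
  simp only [Sset, mem_filter, Fintype.mem_piFinset, mem_Icc]
  exact ⟨hbounds, le_min (by simpa using hcard)
    ((card_le_univ _).trans_eq (Fintype.card_fin k)), hinj⟩

lemma exists_nvec_eq (hkM : k < M) {t : ℕ} {n : Fin k → ℕ} (hn : n ∈ Sset k t) :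
    ∃ x : ℕ → Fin M, nvec k x t = n := by
  classical
  simp only [Sset, mem_filter, Fintype.mem_piFinset, mem_Icc] at hn
  obtain ⟨hbounds, -, hinj⟩ := hn
  -- Visit `i` at time `t - n i`, and a non-AR regime at every time no counter prescribes.
  let x : ℕ → Fin M := fun u =>
    if h : ∃ l, n l + u = t then Fin.castLE hkM.le h.choose else ⟨k, hkM⟩
  refine ⟨x, funext fun i => counter_eq_of_last_visit (hbounds i).1 (hbounds i).2 ?_ ?_⟩
  · intro hi
    have h : ∃ l, n l + (t - n i) = t := ⟨i, by grind⟩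
    have hchoose : h.choose = i := by
      by_contra hne
      have hspec := h.choose_spec
      exact hinj _ _ hne (by grind) hi (by grind)
    simp only [x, dif_pos h, hchoose, Fin.val_castLE]
  · intro u _ hu hxu
    by_cases h : ∃ l, n l + u = t
    · simp only [x, dif_pos h, Fin.val_castLE] at hxu
      have hspec := h.choose_spec
      rw [Fin.ext hxu] at hspec
      omega
    · simp only [x, dif_neg h] at hxu
      exact i.isLt.ne' hxu

end Counters

section Paths

variable {M k s : ℕ}

lemma pad_of_le (a : Fin (s + 1) → Fin M) {u : ℕ} (hu : u ≤ s) :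
    pad a u = a ⟨u, Nat.lt_succ_of_le hu⟩ := by
  simp only [pad, min_eq_left hu]

lemma pad_snoc_of_le (a : Fin (s + 1) → Fin M) (l : Fin M) {u : ℕ} (hu : u ≤ s) :
    pad (Fin.snoc (α := fun _ => Fin M) a l : Fin (s + 2) → Fin M) u = pad a u := by
  rw [pad_of_le _ hu, pad_of_le _ (hu.trans s.le_succ), Fin.snoc, dif_pos (Nat.lt_succ_of_le hu)]
  rfl

lemma pad_snoc_last (a : Fin (s + 1) → Fin M) (l : Fin M) :
    pad (Fin.snoc (α := fun _ => Fin M) a l : Fin (s + 2) → Fin M) (s + 1) = l := by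
  rw [pad_of_le _ le_rfl]
  exact Fin.snoc_last _ _

lemma nvec_pad_snoc (a : Fin (s + 1) → Fin M) (l : Fin M) {u : ℕ} (hu : u ≤ s + 1) :
    nvec k (pad (Fin.snoc (α := fun _ => Fin M) a l : Fin (s + 2) → Fin M)) u =
      nvec k (pad a) u :=
  dependsOn_nvec k u fun _ hv => pad_snoc_of_le a l (Nat.le_of_lt_succ (hv.trans_le hu))

lemma sum_filter_snoc {R : Type*} [AddCommMonoid R] {E : (ℕ → Fin M) → Prop} [DecidablePred E]
    (hE : DependsOn E (Set.Iic s)) (F : (Fin (s + 2) → Fin M) → R) :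
    ∑ b : Fin (s + 2) → Fin M with E (pad b), F b =
      ∑ a : Fin (s + 1) → Fin M with E (pad a), ∑ l,
        F (Fin.snoc (α := fun _ => Fin M) a l) := by
  have hsnoc (a : Fin (s + 1) → Fin M) (l : Fin M) :
      E (pad (Fin.snoc (α := fun _ => Fin M) a l : Fin (s + 2) → Fin M)) = E (pad a) :=
    hE fun u hu => pad_snoc_of_le a l hu
  rw [sum_filter, ← (Fin.snocEquiv fun _ : Fin (s + 2) => Fin M).sum_comp,
    Fintype.sum_prod_type_right, sum_filter]
  refine sum_congr rfl fun a _ => ?_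
  simp only [Fin.snocEquiv, Equiv.coe_fn_mk, hsnoc, sum_ite_irrel, sum_const_zero]

end Paths

section Weights

variable {M k : ℕ} (pi0 : Fin M → ℝ) (p : Fin M → Fin M → ℝ) (f0 : Fin M → ℝ)
  (f : ℕ → Fin M → (Fin k → ℕ) → ℝ)

lemma wpath_snoc {s : ℕ} (a : Fin (s + 1) → Fin M) (l : Fin M) :
    wpath k pi0 p f0 f (Fin.snoc (α := fun _ => Fin M) a l : Fin (s + 2) → Fin M) =
      wpath k pi0 p f0 f a *
        (p (pad a s) l * f (s + 1) l (stepCounter (nvec k (pad a) s) (pad a s))) := by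
  have hpast : ∀ u ∈ Icc 1 s, u - 1 ≤ s ∧ u ≤ s := fun u hu => by grind
  rw [wpath, wpath, prod_Icc_succ_top (Nat.le_add_left 1 s), ← mul_assoc, pad_snoc_last,
    nvec_pad_snoc a l le_rfl, nvec_succ, Nat.add_sub_cancel, pad_snoc_of_le a l le_rfl]
  congr 2
  refine prod_congr rfl fun u hu => ?_
  obtain ⟨hpred, hle⟩ := hpast u hu
  rw [pad_snoc_of_le a l hpred, pad_snoc_of_le a l hle, nvec_pad_snoc a l (hle.trans s.le_succ)]

/-- The backward quantity of the smoothing recursion: the total weight of the last `m` transitions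
of a path of length `s + m`, given `r_s = j` and counters `n` at time `s`. -/
noncomputable def backward : ℕ → ℕ → (Fin k → ℕ) → Fin M → ℝ
  | 0, _, _, _ => 1
  | m + 1, s, n, j => ∑ l, p j l * f (s + 1) l (stepCounter n j) *
      backward m (s + 1) (stepCounter n j) l

lemma sum_wpath_eq_sum_mul_backward {T m s : ℕ} (hT : s + m = T) {E : (ℕ → Fin M) → Prop}
    [DecidablePred E] (hE : DependsOn E (Set.Iic s)) :
    ∑ r : Fin (T + 1) → Fin M with E (pad r), wpath k pi0 p f0 f r =
      ∑ a : Fin (s + 1) → Fin M with E (pad a),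
        wpath k pi0 p f0 f a * backward p f m s (nvec k (pad a) s) (pad a s) := by
  induction m generalizing s with
  | zero =>
    obtain rfl : s = T := hT
    simp only [backward, mul_one]
  | succ m ih =>
    rw [ih (by omega) (hE.mono (Set.Iic_subset_Iic.2 s.le_succ)), sum_filter_snoc hE]
    refine sum_congr rfl fun a _ => ?_
    simp only [backward, mul_sum, wpath_snoc, nvec_pad_snoc a _ le_rfl, nvec_succ, pad_snoc_last,
      mul_assoc]

lemma sum_wpath_and_succ_eq {T m s : ℕ} (hT : s + 1 + m = T) {E : (ℕ → Fin M) → Prop}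
    [DecidablePred E] (hE : DependsOn E (Set.Iic s)) (j : Fin M) :
    ∑ r : Fin (T + 1) → Fin M with E (pad r) ∧ pad r (s + 1) = j, wpath k pi0 p f0 f r =
      ∑ a : Fin (s + 1) → Fin M with E (pad a), wpath k pi0 p f0 f a *
        (p (pad a s) j * f (s + 1) j (stepCounter (nvec k (pad a) s) (pad a s)) *
          backward p f m (s + 1) (stepCounter (nvec k (pad a) s) (pad a s)) j) := by
  have hEj : DependsOn (fun x => E x ∧ x (s + 1) = j) (Set.Iic (s + 1)) := fun x y hxy => by
    simp only [hE fun u (hu : u ≤ s) => hxy u (hu.trans s.le_succ),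
      hxy (s + 1) Set.self_mem_Iic]
  rw [sum_wpath_eq_sum_mul_backward pi0 p f0 f hT hEj, ← filter_filter, sum_filter,
    sum_filter_snoc hE]
  refine sum_congr rfl fun a _ => ?_
  simp only [wpath_snoc, nvec_pad_snoc a _ le_rfl, nvec_succ, pad_snoc_last, sum_ite_eq',
    mem_univ, if_true, mul_assoc]

lemma sum_wpath_transition {T m s : ℕ} (hT : s + 1 + m = T) (n : Fin k → ℕ) (i j : Fin M) :
    ∑ r : Fin (T + 1) → Fin M with (pad r s = i ∧ nvec k (pad r) s = n) ∧ pad r (s + 1) = j,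
        wpath k pi0 p f0 f r =
      alpha k pi0 p f0 f s n i * (p i j * f (s + 1) j (stepCounter n i) *
        backward p f m (s + 1) (stepCounter n i) j) := by
  have hE : DependsOn (fun x : ℕ → Fin M => x s = i ∧ nvec k x s = n) (Set.Iic s) :=
    fun x y hxy => by
      simp only [hxy s Set.self_mem_Iic, dependsOn_nvec k s fun u (hu : u < s) => hxy u hu.le]
  rw [sum_wpath_and_succ_eq pi0 p f0 f hT hE, alpha, sum_mul]
  refine sum_congr (by simp only [pad_of_le _ le_rfl, Fin.last]) fun a ha => ?_
  obtain ⟨hlast, hcounters⟩ := (mem_filter.1 ha).2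
  rw [hcounters, pad_of_le a le_rfl, ← hlast, Fin.last]

end Weights

section Smoothing

variable {M k : ℕ} {pi0 : Fin M → ℝ} {p : Fin M → Fin M → ℝ} {f0 : Fin M → ℝ}
  {f : ℕ → Fin M → (Fin k → ℕ) → ℝ} {T : ℕ}

lemma Ppath_eq_sum_fiberwise {κ : Type*} [DecidableEq κ] {E : Finset (Fin (T + 1) → Fin M)}
    {S : Finset κ} {g : (Fin (T + 1) → Fin M) → κ} (hg : ∀ r ∈ E, g r ∈ S) :
    Ppath k pi0 p f0 f T E = ∑ c ∈ S, Ppath k pi0 p f0 f T {r ∈ E | g r = c} := by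
  simp only [Ppath, ← sum_div, sum_fiberwise_of_maps_to hg]

lemma Ppath_nvec_apply_eq_sum_gamma (t : ℕ) (i : Fin k) (c : ℕ) (j : Fin M) :
    Ppath k pi0 p f0 f T
        (univ.filter fun r : Fin (T + 1) → Fin M => nvec k (pad r) t i = c ∧ pad r t = j) =
      ∑ n ∈ (Sset k t).filter (fun n => n i = c), gamma k pi0 p f0 f T t n j := by
  rw [Ppath_eq_sum_fiberwise (S := (Sset k t).filter (fun n => n i = c))
    (g := fun r => nvec k (pad r) t) fun r hr =>
      mem_filter.2 ⟨nvec_mem_Sset _ _, (mem_filter.1 hr).2.1⟩]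
  refine sum_congr rfl fun n hn => ?_
  rw [gamma, filter_filter]
  congr 1
  exact filter_congr fun r _ =>
    ⟨fun h => ⟨h.1.2, h.2⟩, fun h => ⟨⟨h.2 ▸ (mem_filter.1 hn).2, h.1⟩, h.2⟩⟩

lemma Ppath_pair_eq_sum_nvec (s : ℕ) (i j : Fin M) :
    Ppath k pi0 p f0 f T
        (univ.filter fun r : Fin (T + 1) → Fin M => pad r s = i ∧ pad r (s + 1) = j) =
      ∑ n ∈ Sset k s, Ppath k pi0 p f0 f T (univ.filter fun r : Fin (T + 1) → Fin M =>
        (pad r s = i ∧ nvec k (pad r) s = n) ∧ pad r (s + 1) = j) := by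
  rw [Ppath_eq_sum_fiberwise (g := fun r => nvec k (pad r) s) fun r _ => nvec_mem_Sset _ _]
  simp only [filter_filter, and_right_comm]

lemma gamma_succ_eq_sum_Ppath (s : ℕ) {n : Fin k → ℕ} (hn : ∀ l, 1 ≤ n l) (j : Fin M) :
    gamma k pi0 p f0 f T (s + 1) (fun l => n l + 1) j =
      ∑ i ∈ univ.filter (fun i : Fin M => k ≤ (i : ℕ)),
        Ppath k pi0 p f0 f T (univ.filter fun r : Fin (T + 1) → Fin M =>
          (pad r s = i ∧ nvec k (pad r) s = n) ∧ pad r (s + 1) = j) := by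
  simp only [gamma, nvec_succ_eq_add_one_iff _ _ hn]
  rw [Ppath_eq_sum_fiberwise (S := univ.filter fun i : Fin M => k ≤ (i : ℕ))
    (g := fun r => pad r s) fun r hr => by simpa using (mem_filter.1 hr).2.2.1]
  refine sum_congr rfl fun i hi => ?_
  rw [filter_filter]
  congr 1
  grind

/-- The normalised weight of the emission at time `s + 1` and of everything after it, for a path
with `r_{s+1} = j` that left a non-AR regime at time `s` with counters `n`; it does not depend on
which non-AR regime that was. -/
noncomputable def futureFactor (pi0 : Fin M → ℝ) (p : Fin M → Fin M → ℝ) (f0 : Fin M → ℝ)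
    (f : ℕ → Fin M → (Fin k → ℕ) → ℝ) (T s : ℕ) (n : Fin k → ℕ) (j : Fin M) : ℝ :=
  f (s + 1) j (fun l => n l + 1) * backward p f (T - (s + 1)) (s + 1) (fun l => n l + 1) j /
    ∑ r : Fin (T + 1) → Fin M, wpath k pi0 p f0 f r

lemma Ppath_transition_eq_mul_futureFactor {s : ℕ} (hs : s < T) (n : Fin k → ℕ) {i : Fin M}
    (hi : k ≤ (i : ℕ)) (j : Fin M) :
    Ppath k pi0 p f0 f T (univ.filter fun r : Fin (T + 1) → Fin M =>
        (pad r s = i ∧ nvec k (pad r) s = n) ∧ pad r (s + 1) = j) =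
      p i j * alpha k pi0 p f0 f s n i * futureFactor pi0 p f0 f T s n j := by
  rw [Ppath, sum_wpath_transition pi0 p f0 f (Nat.add_sub_of_le hs), stepCounter_of_le n hi,
    futureFactor]
  ring

lemma gamma_succ_eq_mul_futureFactor {s : ℕ} (hs : s < T) {n : Fin k → ℕ} (hn : ∀ l, 1 ≤ n l)
    (j : Fin M) :
    gamma k pi0 p f0 f T (s + 1) (fun l => n l + 1) j =
      (∑ i ∈ univ.filter (fun i : Fin M => k ≤ (i : ℕ)), p i j * alpha k pi0 p f0 f s n i) *
        futureFactor pi0 p f0 f T s n j := by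
  rw [gamma_succ_eq_sum_Ppath s hn j, sum_mul]
  exact sum_congr rfl fun i hi =>
    Ppath_transition_eq_mul_futureFactor hs n (mem_filter.1 hi).2 j

lemma Ppath_transition_eq_gamma_mul_div {s : ℕ} (hs : s < T) {n : Fin k → ℕ} (hn : ∀ l, 1 ≤ n l)
    {i : Fin M} (hi : k ≤ (i : ℕ)) {j : Fin M}
    (hden : ∑ l ∈ univ.filter (fun l : Fin M => k ≤ (l : ℕ)),
      p l j * alphaHat k pi0 p f0 f s n l ≠ 0) :
    Ppath k pi0 p f0 f T (univ.filter fun r : Fin (T + 1) → Fin M =>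
        (pad r s = i ∧ nvec k (pad r) s = n) ∧ pad r (s + 1) = j) =
      gamma k pi0 p f0 f T (s + 1) (fun l => n l + 1) j * p i j * alphaHat k pi0 p f0 f s n i /
        ∑ l ∈ univ.filter (fun l : Fin M => k ≤ (l : ℕ)), p l j * alphaHat k pi0 p f0 f s n l := by
  rw [eq_div_iff hden, Ppath_transition_eq_mul_futureFactor hs n hi,
    gamma_succ_eq_mul_futureFactor hs hn]
  simp only [alphaHat, ← mul_div_assoc, ← sum_div]
  ring

end Smoothing

section Positivity

variable {M k : ℕ} {pi0 : Fin M → ℝ} {p : Fin M → Fin M → ℝ} {f0 : Fin M → ℝ}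
  {f : ℕ → Fin M → (Fin k → ℕ) → ℝ} {t : ℕ}

lemma wpath_pos (hpi : ∀ i, 0 < pi0 i) (hp : ∀ i j, 0 < p i j) (hf0 : ∀ i, 0 < f0 i)
    (hf : ∀ u, 1 ≤ u → u ≤ t → ∀ (j : Fin M) n, 0 < f u j n) (a : Fin (t + 1) → Fin M) :
    0 < wpath k pi0 p f0 f a :=
  mul_pos (mul_pos (hpi _) (hf0 _)) <| prod_pos fun u hu =>
    mul_pos (hp _ _) (hf u (mem_Icc.1 hu).1 (mem_Icc.1 hu).2 _ _)

lemma exists_path_nvec_eq (hkM : k < M) {n : Fin k → ℕ} (hn : n ∈ Sset k t) (i : Fin M) :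
    ∃ a : Fin (t + 1) → Fin M, a (Fin.last t) = i ∧ nvec k (pad a) t = n := by
  obtain ⟨x, hx⟩ := exists_nvec_eq hkM hn
  refine ⟨fun u => Function.update x t i u, Function.update_self t i x, ?_⟩
  rw [← hx]
  refine dependsOn_nvec k t fun u (hu : u < t) => ?_
  rw [pad_of_le _ hu.le, Function.update_of_ne hu.ne]

lemma alpha_pos (hkM : k < M) (hpi : ∀ i, 0 < pi0 i) (hp : ∀ i j, 0 < p i j)
    (hf0 : ∀ i, 0 < f0 i) (hf : ∀ u, 1 ≤ u → u ≤ t → ∀ (j : Fin M) n, 0 < f u j n)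
    {n : Fin k → ℕ} (hn : n ∈ Sset k t) (i : Fin M) : 0 < alpha k pi0 p f0 f t n i := by
  obtain ⟨a, ha⟩ := exists_path_nvec_eq hkM hn i
  exact sum_pos (fun a _ => wpath_pos hpi hp hf0 hf a) ⟨a, mem_filter.2 ⟨mem_univ a, ha⟩⟩

lemma alphaHat_pos (hkM : k < M) (hpi : ∀ i, 0 < pi0 i) (hp : ∀ i j, 0 < p i j)
    (hf0 : ∀ i, 0 < f0 i) (hf : ∀ u, 1 ≤ u → u ≤ t → ∀ (j : Fin M) n, 0 < f u j n)
    {n : Fin k → ℕ} (hn : n ∈ Sset k t) (i : Fin M) : 0 < alphaHat k pi0 p f0 f t n i :=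
  have hα := fun n hn => alpha_pos (n := n) hkM hpi hp hf0 hf hn
  div_pos (hα n hn i) <| sum_pos (fun n' hn' => sum_pos (fun l _ => hα n' hn' l) ⟨i, mem_univ i⟩)
    ⟨n, hn⟩

lemma sum_mul_alphaHat_pos (hkM : k < M) (hpi : ∀ i, 0 < pi0 i) (hp : ∀ i j, 0 < p i j)
    (hf0 : ∀ i, 0 < f0 i) (hf : ∀ u, 1 ≤ u → u ≤ t → ∀ (j : Fin M) n, 0 < f u j n)
    {n : Fin k → ℕ} (hn : n ∈ Sset k t) (j : Fin M) :
    0 < ∑ l ∈ univ.filter (fun l : Fin M => k ≤ (l : ℕ)), p l j * alphaHat k pi0 p f0 f t n l :=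
  sum_pos (fun l _ => mul_pos (hp l j) (alphaHat_pos hkM hpi hp hf0 hf hn l))
    ⟨⟨k, hkM⟩, mem_filter.2 ⟨mem_univ _, le_rfl⟩⟩

end Positivity

end MRS

open MRS in
theorem smoothed_pairwise_probabilities_general (M k T : ℕ) (hkM : k ≤ M)
    (pi0 : Fin M → ℝ) (p : Fin M → Fin M → ℝ) (f0 : Fin M → ℝ)
    (f : ℕ → Fin M → (Fin k → ℕ) → ℝ)
    (_hW : ∑ r : Fin (T + 1) → Fin M, wpath k pi0 p f0 f r ≠ 0)
    (t : ℕ) (ht1 : 1 ≤ t) (htT : t ≤ T) (j : Fin M)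
    (hden : ∀ n ∈ Sset k (t - 1), ∑ l ∈ univ.filter (fun l : Fin M => k ≤ (l : ℕ)),
      p l j * alphaHat k pi0 p f0 f (t - 1) n l ≠ 0) :
    (∀ i : Fin k,
      Ppath k pi0 p f0 f T
          (univ.filter fun r : Fin (T + 1) → Fin M =>
            pad r (t - 1) = Fin.castLE hkM i ∧ pad r t = j)
        = Ppath k pi0 p f0 f T
            (univ.filter fun r : Fin (T + 1) → Fin M =>
              nvec k (pad r) t i = 1 ∧ pad r t = j) ∧
      Ppath k pi0 p f0 f T
          (univ.filter fun r : Fin (T + 1) → Fin M =>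
            pad r (t - 1) = Fin.castLE hkM i ∧ pad r t = j)
        = ∑ n ∈ (Sset k t).filter (fun n => n i = 1), gamma k pi0 p f0 f T t n j) ∧
    (∀ i : Fin M, k ≤ (i : ℕ) →
      Ppath k pi0 p f0 f T
          (univ.filter fun r : Fin (T + 1) → Fin M => pad r (t - 1) = i ∧ pad r t = j)
        = ∑ n' ∈ Sset k (t - 1),
            gamma k pi0 p f0 f T t (fun l => n' l + 1) j * p i j *
                alphaHat k pi0 p f0 f (t - 1) n' i /
              ∑ l ∈ univ.filter (fun l : Fin M => k ≤ (l : ℕ)),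
                p l j * alphaHat k pi0 p f0 f (t - 1) n' l) := by
  obtain ⟨s, rfl⟩ := Nat.exists_eq_add_of_le' ht1
  rw [Nat.add_sub_cancel] at hden ⊢
  refine ⟨fun i => ?_, fun i hi => ?_⟩
  · simp only [← nvec_succ_apply_eq_one_iff hkM, Ppath_nvec_apply_eq_sum_gamma, and_self]
  · rw [Ppath_pair_eq_sum_nvec]
    exact sum_congr rfl fun n hn =>
      Ppath_transition_eq_gamma_mul_div htT (one_le_of_mem_Sset hn) hi (hden n hn)

open MRS in
/-- Smoothed pairwise regime probabilities. For `t ∈ {1,…,T}` and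
`j ∈ S`: (a) if `i ∈ S_AR`, then
`P(r_{t-1} = i, r_t = j) = P(n_{t,i}(r) = 1, r_t = j) = ∑_{n ∈ S^(t), n_i = 1} γ^(t)_n(j)`;
(b) if `i ∈ S_AR^c`, then `P(r_{t-1} = i, r_t = j)` equals
`∑_{n : n-1 ∈ S^(t-1)} γ^(t)_n(j)·p_{ij}·α̂^(t-1)_{n-1}(i) / (∑_{ℓ ∈ S_AR^c} p_{ℓj}·α̂^(t-1)_{n-1}(ℓ))`. -/
theorem smoothed_pairwise_probabilities (M k T : ℕ) (hM : 2 ≤ M) (hk : 1 ≤ k)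
    (hkM : k < M) (hT : 1 ≤ T)
    (pi0 : Fin M → ℝ) (p : Fin M → Fin M → ℝ) (f0 : Fin M → ℝ)
    (f : ℕ → Fin M → (Fin k → ℕ) → ℝ)
    (hpi : ∀ i, 0 < pi0 i) (hpisum : ∑ i, pi0 i = 1)
    (hp : ∀ i j, 0 < p i j) (hprow : ∀ i, ∑ j, p i j = 1)
    (hf0 : ∀ i, 0 < f0 i) (hf : ∀ t, 1 ≤ t → t ≤ T → ∀ (j : Fin M) n, 0 < f t j n)
    (t : ℕ) (ht1 : 1 ≤ t) (htT : t ≤ T) (j : Fin M) :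
    (∀ i : Fin k,
      Ppath k pi0 p f0 f T
          (Finset.univ.filter fun r : Fin (T + 1) → Fin M =>
            pad r (t - 1) = Fin.castLE hkM.le i ∧ pad r t = j)
        = Ppath k pi0 p f0 f T
            (Finset.univ.filter fun r : Fin (T + 1) → Fin M =>
              nvec k (pad r) t i = 1 ∧ pad r t = j) ∧
      Ppath k pi0 p f0 f T
          (Finset.univ.filter fun r : Fin (T + 1) → Fin M =>
            pad r (t - 1) = Fin.castLE hkM.le i ∧ pad r t = j)
        = ∑ n ∈ (Sset k t).filter (fun n => n i = 1), gamma k pi0 p f0 f T t n j) ∧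
    (∀ i : Fin M, k ≤ (i : ℕ) →
      Ppath k pi0 p f0 f T
          (Finset.univ.filter fun r : Fin (T + 1) → Fin M =>
            pad r (t - 1) = i ∧ pad r t = j)
        = ∑ n' ∈ Sset k (t - 1),
            gamma k pi0 p f0 f T t (fun ℓ => n' ℓ + 1) j * p i j *
                alphaHat k pi0 p f0 f (t - 1) n' i /
              ∑ ℓ ∈ Finset.univ.filter (fun ℓ : Fin M => k ≤ (ℓ : ℕ)),
                p ℓ j * alphaHat k pi0 p f0 f (t - 1) n' ℓ) :=
  smoothed_pairwise_probabilities_general M k T hkM.le pi0 p f0 f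
    (sum_pos (fun r _ => wpath_pos hpi hp hf0 hf r) ⟨fun _ => j, mem_univ _⟩).ne' t ht1 htT j
    fun _ hn => (sum_mul_alphaHat_pos hkM hpi hp hf0
      (fun u hu hut => hf u hu (hut.trans ((Nat.sub_le t 1).trans htT))) hn j).ne'
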